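/- Let f : Λ(n)³ → ℤ satisfy the Duistermaat axioms. Then for any n×n Hermitian matrices A, B and C, f(G_A, G_B, G_C) = n_−(B − A) − n_−(C − A) + n_−(C − B). -/

import Mathlib

/-!
Apply the cocycle property to `(G_A, G_B, G_C, G_∞)`: it expresses `f(G_A, G_B, G_C)` through
the three values `f(G_A, G_B, G_∞)`, `f(G_A, G_C, G_∞)`, `f(G_B, G_C, G_∞)`. For a Hermitian
matrix `A` the shear `(x, y) ↦ (x, y + A x)` is symplectic, fixes `G_∞`, and carries `G_M` to
`G_{M + A}`. Invariance under it and normalization therefore give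
`f(G_A, G_B, G_∞) = f(G_0, G_{B - A}, G_∞) = n₋(B - A)` (`index_graph_graph_vert`).
-/

open Matrix

/-- The Hermitian symplectic space `ℂⁿ ⊕ ℂⁿ`. -/
abbrev SympSpace (n : ℕ) := (Fin n → ℂ) × (Fin n → ℂ)

/-- The symplectic form `ω((x₁,x₂),(y₁,y₂)) = ⟨x₁,y₂⟩ − ⟨x₂,y₁⟩`. -/
noncomputable def omegaForm {n : ℕ} (u v : SympSpace n) : ℂ :=
  star u.1 ⬝ᵥ v.2 - star u.2 ⬝ᵥ v.1

/-- A subspace is Lagrangian iff it coincides with its symplectic complement. -/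
def IsLagrangian {n : ℕ} (L : Submodule ℂ (SympSpace n)) : Prop :=
  ∀ v, v ∈ L ↔ ∀ u ∈ L, omegaForm u v = 0

/-- The Lagrangian Grassmannian `Λ(n)`. -/
abbrev LagGr (n : ℕ) := {L : Submodule ℂ (SympSpace n) // IsLagrangian L}

/-- The graph `G_M = {(x, Mx)}` of a matrix `M`. -/
noncomputable def graphOf {n : ℕ} (M : Matrix (Fin n) (Fin n) ℂ) :
    Submodule ℂ (SympSpace n) := LinearMap.graph M.mulVecLin

/-- The vertical subspace `G_∞ = 0 ⊕ ℂⁿ`. -/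
noncomputable def vertSub (n : ℕ) : Submodule ℂ (SympSpace n) :=
  (⊥ : Submodule ℂ (Fin n → ℂ)).prod (⊤ : Submodule ℂ (Fin n → ℂ))

/-- The negative index (Morse index) of a sesquilinear form: the maximal dimension of a
subspace on which it is negative definite. -/
noncomputable def formNegIdx {V : Type*} [AddCommGroup V] [Module ℂ V]
    (Q : V → V → ℂ) : ℕ :=
  sSup {d : ℕ | ∃ W : Submodule ℂ V, Module.finrank ℂ W = d ∧
    ∀ x ∈ W, x ≠ 0 → (Q x x).re < 0}

/-- The number of negative eigenvalues (Morse index) of a Hermitian matrix, as the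
maximal dimension of a subspace on which the associated form is negative definite. -/
noncomputable def negIdxM {n : ℕ} (A : Matrix (Fin n) (Fin n) ℂ) : ℕ :=
  formNegIdx (fun x y : Fin n → ℂ => star x ⬝ᵥ A.mulVec y)

/-- A symplectic transformation: a bijective linear map preserving `ω`. -/
def IsSymplecticMap {n : ℕ} (S : SympSpace n ≃ₗ[ℂ] SympSpace n) : Prop :=
  ∀ u v, omegaForm (S u) (S v) = omegaForm u v

/-- The Duistermaat axioms for `f : Λ(n)³ → ℤ`: normalization, symplectic invariance
and the cocycle property. -/
def SatisfiesDuiAxioms {n : ℕ} (f : LagGr n → LagGr n → LagGr n → ℤ) : Prop :=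
  (∀ (A : Matrix (Fin n) (Fin n) ℂ), A.IsHermitian →
    ∀ L₁ L₂ L₃ : LagGr n,
      L₁.val = graphOf (0 : Matrix (Fin n) (Fin n) ℂ) →
      L₂.val = graphOf A → L₃.val = vertSub n →
      f L₁ L₂ L₃ = negIdxM A) ∧
  (∀ S : SympSpace n ≃ₗ[ℂ] SympSpace n, IsSymplecticMap S →
    ∀ L₁ L₂ L₃ M₁ M₂ M₃ : LagGr n,
      M₁.val = (L₁.val).map S.toLinearMap →
      M₂.val = (L₂.val).map S.toLinearMap →
      M₃.val = (L₃.val).map S.toLinearMap →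
      f M₁ M₂ M₃ = f L₁ L₂ L₃) ∧
  (∀ L₁ L₂ L₃ L₄ : LagGr n,
    f L₁ L₂ L₃ - f L₁ L₂ L₄ + f L₁ L₃ L₄ - f L₂ L₃ L₄ = 0)

theorem star_mulVec_dotProduct_of_isHermitian {n : ℕ} {M : Matrix (Fin n) (Fin n) ℂ}
    (hM : M.IsHermitian) (x y : Fin n → ℂ) : star (M *ᵥ x) ⬝ᵥ y = star x ⬝ᵥ M *ᵥ y := by
  rw [star_mulVec, hM.eq, dotProduct_mulVec]

theorem mem_graphOf {n : ℕ} {M : Matrix (Fin n) (Fin n) ℂ} {v : SympSpace n} :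
    v ∈ graphOf M ↔ v.2 = M *ᵥ v.1 := by
  simp [graphOf, LinearMap.mem_graph_iff]

theorem mem_vertSub {n : ℕ} {v : SympSpace n} : v ∈ vertSub n ↔ v.1 = 0 := by
  simp [vertSub, Submodule.mem_prod]

open scoped ComplexOrder in
theorem isLagrangian_graphOf {n : ℕ} {M : Matrix (Fin n) (Fin n) ℂ} (hM : M.IsHermitian) :
    IsLagrangian (graphOf M) := by
  intro v
  rw [mem_graphOf]
  constructor
  · intro hv u hu
    rw [mem_graphOf] at hu
    rw [omegaForm, hu, hv, star_mulVec_dotProduct_of_isHermitian hM, sub_self]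
  · intro h
    -- Pairing with `(x, M x)` gives `⟨x, v₂ - M v₁⟩`; take `x = v₂ - M v₁`.
    have h1 := h (v.2 - M *ᵥ v.1, M *ᵥ (v.2 - M *ᵥ v.1)) (mem_graphOf.2 rfl)
    rw [omegaForm, star_mulVec_dotProduct_of_isHermitian hM, ← dotProduct_sub] at h1
    exact sub_eq_zero.1 (dotProduct_star_self_eq_zero.1 h1)

open scoped ComplexOrder in
theorem isLagrangian_vertSub (n : ℕ) : IsLagrangian (vertSub n) := by
  intro v
  rw [mem_vertSub]
  constructor
  · intro hv u hu
    rw [mem_vertSub] at hu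
    simp [omegaForm, hu, hv]
  · intro h
    have h1 := h (0, v.1) (mem_vertSub.2 rfl)
    simp only [omegaForm, star_zero, zero_dotProduct, zero_sub, neg_eq_zero] at h1
    exact dotProduct_star_self_eq_zero.1 h1

/-- The shear `(x, y) ↦ (x, y + A x)` of `ℂⁿ ⊕ ℂⁿ`. -/
noncomputable def shear {n : ℕ} (A : Matrix (Fin n) (Fin n) ℂ) :
    SympSpace n ≃ₗ[ℂ] SympSpace n :=
  LinearEquiv.skewProd (LinearEquiv.refl ℂ _) (LinearEquiv.refl ℂ _) A.mulVecLin

theorem shear_apply {n : ℕ} (A : Matrix (Fin n) (Fin n) ℂ) (v : SympSpace n) :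
    shear A v = (v.1, v.2 + A *ᵥ v.1) := rfl

theorem isSymplecticMap_shear {n : ℕ} {A : Matrix (Fin n) (Fin n) ℂ} (hA : A.IsHermitian) :
    IsSymplecticMap (shear A) := by
  intro u v
  simp only [omegaForm, shear_apply, star_add, add_dotProduct, dotProduct_add,
    star_mulVec_dotProduct_of_isHermitian hA]
  ring

theorem map_shear_graphOf {n : ℕ} (A M : Matrix (Fin n) (Fin n) ℂ) :
    (graphOf M).map (shear A).toLinearMap = graphOf (M + A) := by
  ext v
  simp only [Submodule.mem_map, mem_graphOf, LinearEquiv.coe_coe, shear_apply]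
  constructor
  · rintro ⟨u, hu, rfl⟩
    simp [hu, add_mulVec]
  · intro hv
    exact ⟨(v.1, M *ᵥ v.1), rfl, Prod.ext rfl (by simp [hv, add_mulVec])⟩

theorem map_shear_vertSub {n : ℕ} (A : Matrix (Fin n) (Fin n) ℂ) :
    (vertSub n).map (shear A).toLinearMap = vertSub n := by
  ext v
  simp only [Submodule.mem_map, mem_vertSub, LinearEquiv.coe_coe, shear_apply]
  constructor
  · rintro ⟨u, hu, rfl⟩
    exact hu
  · intro hv
    exact ⟨v, hv, Prod.ext rfl (by simp [hv])⟩

theorem index_graph_graph_vert {n : ℕ} {f : LagGr n → LagGr n → LagGr n → ℤ}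
    (hf : SatisfiesDuiAxioms f) {A B : Matrix (Fin n) (Fin n) ℂ}
    (hA : A.IsHermitian) (hB : B.IsHermitian) {LA LB LV : LagGr n}
    (hLA : LA.val = graphOf A) (hLB : LB.val = graphOf B) (hLV : LV.val = vertSub n) :
    f LA LB LV = negIdxM (B - A) := by
  obtain ⟨hnorm, hinv, -⟩ := hf
  have h0 : (0 : Matrix (Fin n) (Fin n) ℂ).IsHermitian := isHermitian_zero
  have hBA : (B - A).IsHermitian := hB.sub hA
  rw [← hnorm (B - A) hBA ⟨_, isLagrangian_graphOf h0⟩ ⟨_, isLagrangian_graphOf hBA⟩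
    LV rfl rfl hLV]
  refine hinv (shear A) (isSymplecticMap_shear hA) _ _ _ _ _ _ ?_ ?_ ?_
  · rw [map_shear_graphOf, zero_add, hLA]
  · rw [map_shear_graphOf, sub_add_cancel, hLB]
  · rw [hLV, map_shear_vertSub]

/-- For Hermitian matrices `A, B, C`:
`f(G_A, G_B, G_C) = n₋(B − A) − n₋(C − A) + n₋(C − B)`. -/
theorem duistermaat_index_of_graphs (n : ℕ) (hn : 1 ≤ n)
    (f : LagGr n → LagGr n → LagGr n → ℤ) (hf : SatisfiesDuiAxioms f)
    (A B C : Matrix (Fin n) (Fin n) ℂ)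
    (hA : A.IsHermitian) (hB : B.IsHermitian) (hC : C.IsHermitian)
    (LA LB LC : LagGr n)
    (hLA : LA.val = graphOf A) (hLB : LB.val = graphOf B) (hLC : LC.val = graphOf C) :
    f LA LB LC = (negIdxM (B - A) : ℤ) - negIdxM (C - A) + negIdxM (C - B) := by
  let LV : LagGr n := ⟨vertSub n, isLagrangian_vertSub n⟩
  have hLV : LV.val = vertSub n := rfl
  have hcocycle := hf.2.2 LA LB LC LV
  rw [index_graph_graph_vert hf hA hB hLA hLB hLV, index_graph_graph_vert hf hA hC hLA hLC hLV,
    index_graph_graph_vert hf hB hC hLB hLC hLV] at hcocycle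
  linarith
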